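/- The algebraic de Rham cohomology of the smooth affine quadric x² + y² + z² = c (c ≠ 0) over ℂ has dimensions dim H⁰ = 1, dim H¹ = 0, dim H² = 1. -/

import Mathlib

set_option synthInstance.maxHeartbeats 1000000
set_option maxHeartbeats 1000000

open MvPolynomial

/-- The coordinate ring `A = ℂ[x,y,z]/(x²+y²+z²−c)` of the smooth affine quadric. -/
noncomputable abbrev QuadricRing (c : ℂ) : Type :=
  MvPolynomial (Fin 3) ℂ ⧸
    Ideal.span {(X 0 : MvPolynomial (Fin 3) ℂ) ^ 2 + X 1 ^ 2 + X 2 ^ 2 - C c}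

section Polynomial

theorem Polynomial.derivative_surjective_of_charZero {k : Type*} [Field k] [CharZero k] :
    Function.Surjective (Polynomial.derivative : Polynomial k →ₗ[k] Polynomial k) := by
  intro p
  induction p using Polynomial.induction_on' with
  | add p q hp hq =>
    obtain ⟨P, rfl⟩ := hp
    obtain ⟨Q, rfl⟩ := hq
    exact ⟨P + Q, map_add _ _ _⟩
  | monomial n a =>
    refine ⟨Polynomial.monomial (n + 1) (a / (n + 1 : k)), ?_⟩
    have h : (n + 1 : k) ≠ 0 := by exact_mod_cast n.succ_ne_zero
    rw [Polynomial.derivative_monomial]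
    simp [h]

/-- If `(c - X²) q` has zero derivative, then `q = 0`. -/
theorem Polynomial.eq_zero_of_derivative_quadratic_mul_eq_zero {c : ℂ} {q : Polynomial ℂ}
    (h : Polynomial.derivative ((Polynomial.C c - Polynomial.X ^ 2) * q) = 0) : q = 0 := by
  by_contra hq
  have hdeg : (Polynomial.C c - Polynomial.X ^ 2 : Polynomial ℂ).natDegree = 2 := by
    compute_degree!
  have hne : (Polynomial.C c - Polynomial.X ^ 2 : Polynomial ℂ) ≠ 0 := by
    intro h0
    simp [h0] at hdeg
  have h0 := Polynomial.derivative_eq_zero.mp h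
  rw [Polynomial.natDegree_mul hne hq, hdeg] at h0
  omega

/-- For `c ≠ 0`, integration between the two square roots of `c` is a functional whose kernel
consists of the derivatives of the multiples of `c - X²`. -/
theorem Polynomial.exists_functional_ker_derivative_quadratic_mul {c : ℂ} (hc : c ≠ 0) :
    ∃ φ : Polynomial ℂ →ₗ[ℂ] ℂ, φ 1 ≠ 0 ∧ ∀ p, φ p = 0 ↔
      ∃ q, p = Polynomial.derivative ((Polynomial.C c - Polynomial.X ^ 2) * q) := by
  obtain ⟨J, hJ⟩ := LinearMap.exists_rightInverse_of_surjective
    (Polynomial.derivative : Polynomial ℂ →ₗ[ℂ] Polynomial ℂ)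
    (LinearMap.range_eq_top.mpr Polynomial.derivative_surjective_of_charZero)
  have hJ' (p : Polynomial ℂ) : Polynomial.derivative (J p) = p := LinearMap.congr_fun hJ p
  obtain ⟨s, hs⟩ := IsAlgClosed.exists_pow_nat_eq c (n := 2) two_pos
  have hs0 : s ≠ 0 := by
    rintro rfl
    simp [eq_comm, hc] at hs
  have key (P : Polynomial ℂ) : (J (Polynomial.derivative P)).eval s -
      (J (Polynomial.derivative P)).eval (-s) = P.eval s - P.eval (-s) := by
    have h : Polynomial.derivative (J (Polynomial.derivative P) - P) = 0 := by
      rw [map_sub, hJ', sub_self]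
    have h' := Polynomial.eq_C_of_derivative_eq_zero h
    rw [sub_eq_iff_eq_add] at h'
    rw [h']
    simp
  refine ⟨(Polynomial.leval s - Polynomial.leval (-s)) ∘ₗ J, ?_, fun p => ⟨fun hp => ?_, ?_⟩⟩
  · have := key Polynomial.X
    rw [Polynomial.derivative_X] at this
    simp only [LinearMap.comp_apply, LinearMap.sub_apply, Polynomial.leval_apply, this]
    simp only [Polynomial.eval_X, sub_neg_eq_add, ← two_mul]
    exact mul_ne_zero two_ne_zero hs0
  · simp only [LinearMap.comp_apply, LinearMap.sub_apply, Polynomial.leval_apply] at hp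
    set P := J p - Polynomial.C ((J p).eval s) with hP
    have h1 : P.IsRoot s := by simp [hP]
    have h2 : P.IsRoot (-s) := by
      simp only [hP, Polynomial.IsRoot.def, Polynomial.eval_sub, Polynomial.eval_C]
      linear_combination -hp
    have hco : IsCoprime (Polynomial.X - Polynomial.C s) (Polynomial.X - Polynomial.C (-s)) := by
      refine Polynomial.isCoprime_X_sub_C_of_isUnit_sub ?_
      rw [sub_neg_eq_add, ← two_mul]
      exact (mul_ne_zero two_ne_zero hs0).isUnit
    obtain ⟨q, hq⟩ := hco.mul_dvd (Polynomial.dvd_iff_isRoot.mpr h1)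
      (Polynomial.dvd_iff_isRoot.mpr h2)
    refine ⟨-q, ?_⟩
    have hPq : (Polynomial.C c - Polynomial.X ^ 2) * -q = P := by
      rw [hq, ← hs]
      simp only [map_neg, map_pow]
      ring
    rw [hPq, hP, map_sub, hJ', Polynomial.derivative_C, sub_zero]
  · rintro ⟨q, rfl⟩
    simp only [LinearMap.comp_apply, LinearMap.sub_apply, Polynomial.leval_apply, key]
    simp [← hs]

end Polynomial

/-- Coordinates `u, v, z` with `u v + z² = c` on a `ℂ`-algebra `A`, together with the Hamiltonian
derivations `{u, ·}`, `{v, ·}`, `{z, ·}` of the Poisson bracket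
`{u, v} = 2z`, `{v, z} = v`, `{z, u} = u`, and the restriction map to the chart `u ≠ 0`. -/
structure QuadricCoordinates (c : ℂ) (A : Type) [CommRing A] [Algebra ℂ A] where
  u : A
  v : A
  z : A
  Lu : Derivation ℂ A A
  Lv : Derivation ℂ A A
  Lz : Derivation ℂ A A
  chart : A →ₐ[ℂ] LaurentPolynomial (Polynomial ℂ)
  u_mul_v : u * v = algebraMap ℂ A c - z ^ 2
  adjoin_eq_top : Algebra.adjoin ℂ {u, v, z} = ⊤
  Lu_u : Lu u = 0
  Lu_v : Lu v = 2 * z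
  Lu_z : Lu z = -u
  Lv_u : Lv u = -(2 * z)
  Lv_v : Lv v = 0
  Lv_z : Lv z = v
  Lz_u : Lz u = u
  Lz_v : Lz v = -v
  Lz_z : Lz z = 0
  chart_u : chart u = LaurentPolynomial.T 1
  chart_v : chart v =
    LaurentPolynomial.C (Polynomial.C c - Polynomial.X ^ 2) * LaurentPolynomial.T (-1)
  chart_z : chart z = LaurentPolynomial.C Polynomial.X

namespace QuadricCoordinates

variable {c : ℂ} {A : Type} [CommRing A] [Algebra ℂ A] (Q : QuadricCoordinates c A)

/-- The coordinate ring is spanned by the `uⁿ p(z)` and `vⁿ p(z)`. -/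
theorem mem_of_monomials_mem (S : Submodule ℂ A)
    (hu : ∀ (n : ℕ) (p : Polynomial ℂ), Q.u ^ n * Polynomial.aeval Q.z p ∈ S)
    (hv : ∀ (n : ℕ) (p : Polynomial ℂ), Q.v ^ n * Polynomial.aeval Q.z p ∈ S) (a : A) :
    a ∈ S := by
  let s : Set A := Set.range (fun x : ℕ × Polynomial ℂ => Q.u ^ x.1 * Polynomial.aeval Q.z x.2) ∪
    Set.range (fun x : ℕ × Polynomial ℂ => Q.v ^ x.1 * Polynomial.aeval Q.z x.2)
  have hsu (n : ℕ) (p : Polynomial ℂ) :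
      Q.u ^ n * Polynomial.aeval Q.z p ∈ Submodule.span ℂ s :=
    Submodule.subset_span (Or.inl ⟨(n, p), rfl⟩)
  have hsv (n : ℕ) (p : Polynomial ℂ) :
      Q.v ^ n * Polynomial.aeval Q.z p ∈ Submodule.span ℂ s :=
    Submodule.subset_span (Or.inr ⟨(n, p), rfl⟩)
  have hz (p : Polynomial ℂ) : Polynomial.aeval Q.z ((Polynomial.C c - Polynomial.X ^ 2) * p) =
      Q.u * Q.v * Polynomial.aeval Q.z p := by
    rw [Q.u_mul_v]
    simp
  have closed (t : A) (ht : ∀ b ∈ s, b * t ∈ Submodule.span ℂ s) (b : A)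
      (hb : b ∈ Submodule.span ℂ s) : b * t ∈ Submodule.span ℂ s := by
    have : Submodule.span ℂ s ≤
        (Submodule.span ℂ s).comap (LinearMap.mulRight ℂ t) := Submodule.span_le.mpr ht
    exact this hb
  have hsS : Submodule.span ℂ s ≤ S := by
    rw [Submodule.span_le]
    rintro _ (⟨x, rfl⟩ | ⟨x, rfl⟩)
    exacts [hu _ _, hv _ _]
  apply hsS
  suffices h : ∀ b ∈ Submodule.span ℂ s, b * a ∈ Submodule.span ℂ s by
    simpa using h 1 (by simpa using hsu 0 1)
  have ha : a ∈ Algebra.adjoin ℂ {Q.u, Q.v, Q.z} := Q.adjoin_eq_top ▸ trivial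
  induction ha using Algebra.adjoin_induction with
  | mem x hx =>
    refine closed x ?_
    rcases hx with rfl | rfl | rfl
    · rintro _ (⟨⟨n, p⟩, rfl⟩ | ⟨⟨_ | n, p⟩, rfl⟩)
      · convert hsu (n + 1) p using 1
        ring
      · convert hsu 1 p using 1
        ring
      · convert hsv n ((Polynomial.C c - Polynomial.X ^ 2) * p) using 1
        rw [hz]
        ring
    · rintro _ (⟨⟨_ | n, p⟩, rfl⟩ | ⟨⟨n, p⟩, rfl⟩)
      · convert hsv 1 p using 1
        ring
      · convert hsu n ((Polynomial.C c - Polynomial.X ^ 2) * p) using 1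
        rw [hz]
        ring
      · convert hsv (n + 1) p using 1
        ring
    · rintro _ (⟨⟨n, p⟩, rfl⟩ | ⟨⟨n, p⟩, rfl⟩)
      · convert hsu n (p * Polynomial.X) using 1
        simp [mul_assoc]
      · convert hsv n (p * Polynomial.X) using 1
        simp [mul_assoc]
  | algebraMap r =>
    intro b hb
    rw [mul_comm, ← Algebra.smul_def]
    exact Submodule.smul_mem _ _ hb
  | add x y _ _ hx hy =>
    intro b hb
    rw [mul_add]
    exact Submodule.add_mem _ (hx b hb) (hy b hb)
  | mul x y _ _ hx hy =>
    intro b hb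
    rw [← mul_assoc]
    exact hy _ (hx b hb)

theorem chart_aeval_z (p : Polynomial ℂ) :
    Q.chart (Polynomial.aeval Q.z p) = LaurentPolynomial.C p := by
  induction p using Polynomial.induction_on' with
  | add p q hp hq => simp [hp, hq]
  | monomial n a =>
    rw [← Polynomial.C_mul_X_pow_eq_monomial, map_mul, map_mul, map_pow, map_pow,
      Polynomial.aeval_X, Q.chart_z, Polynomial.aeval_C, AlgHom.commutes, map_mul, map_pow]
    rfl

theorem chart_u_pow_mul (n : ℕ) (p : Polynomial ℂ) :
    Q.chart (Q.u ^ n * Polynomial.aeval Q.z p) =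
      LaurentPolynomial.C p * LaurentPolynomial.T n := by
  rw [map_mul, map_pow, chart_aeval_z, chart_u, LaurentPolynomial.T_pow, mul_one, mul_comm]

theorem chart_v_pow_mul (n : ℕ) (p : Polynomial ℂ) :
    Q.chart (Q.v ^ n * Polynomial.aeval Q.z p) =
      LaurentPolynomial.C ((Polynomial.C c - Polynomial.X ^ 2) ^ n * p) *
        LaurentPolynomial.T (-n) := by
  rw [map_mul, map_pow, chart_aeval_z, chart_v, mul_pow, LaurentPolynomial.T_pow, mul_neg_one,
    map_mul, map_pow]
  ring

theorem Lz_u_pow_mul (n : ℕ) (p : Polynomial ℂ) :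
    Q.Lz (Q.u ^ n * Polynomial.aeval Q.z p) =
      (n : ℂ) • (Q.u ^ n * Polynomial.aeval Q.z p) := by
  rw [Derivation.leibniz, Derivation.map_aeval, Derivation.leibniz_pow, Q.Lz_z, Q.Lz_u]
  rcases n with _ | n
  · simp
  · rw [Algebra.smul_def ((n + 1 : ℕ) : ℂ), map_natCast]
    simp only [smul_eq_mul, nsmul_eq_mul, Nat.add_sub_cancel]
    ring

theorem Lz_v_pow_mul (n : ℕ) (p : Polynomial ℂ) :
    Q.Lz (Q.v ^ n * Polynomial.aeval Q.z p) =
      (-n : ℂ) • (Q.v ^ n * Polynomial.aeval Q.z p) := by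
  rw [Derivation.leibniz, Derivation.map_aeval, Derivation.leibniz_pow, Q.Lz_z, Q.Lz_v]
  rcases n with _ | n
  · simp
  · rw [Algebra.smul_def (-((n + 1 : ℕ) : ℂ)), map_neg, map_natCast]
    simp only [smul_eq_mul, nsmul_eq_mul, Nat.add_sub_cancel]
    ring

/-- The coefficient of `uⁿ` in the chart `u ≠ 0`. -/
noncomputable def weight (n : ℤ) : A →ₗ[ℂ] Polynomial ℂ where
  toFun a := (Q.chart a).coeff n
  map_add' a b := by simp
  map_smul' r a := by simp

theorem weight_of_chart_eq {a : A} {m : ℤ} {p : Polynomial ℂ}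
    (h : Q.chart a = LaurentPolynomial.C p * LaurentPolynomial.T m) (n : ℤ) :
    Q.weight n a = if m = n then p else 0 := by
  change (Q.chart a).coeff n = _
  rw [h, ← LaurentPolynomial.single_eq_C_mul_T]
  exact Finsupp.single_apply

theorem weight_zero_aeval_z (p : Polynomial ℂ) :
    Q.weight 0 (Polynomial.aeval Q.z p) = p := by
  rw [Q.weight_of_chart_eq (m := 0) (p := p) (by simp [chart_aeval_z]), if_pos rfl]

theorem weight_Lz (n : ℤ) (a : A) : Q.weight n (Q.Lz a) = (n : ℂ) • Q.weight n a := by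
  refine Q.mem_of_monomials_mem (LinearMap.eqLocus (Q.weight n ∘ₗ Q.Lz.toLinearMap)
    ((n : ℂ) • Q.weight n)) (fun m p => ?_) (fun m p => ?_) a
  · change Q.weight n (Q.Lz _) = (n : ℂ) • Q.weight n _
    rw [Lz_u_pow_mul, map_smul, Q.weight_of_chart_eq (Q.chart_u_pow_mul m p)]
    split_ifs with h
    · rw [← h]
      simp
    · simp
  · change Q.weight n (Q.Lz _) = (n : ℂ) • Q.weight n _
    rw [Lz_v_pow_mul, map_smul, Q.weight_of_chart_eq (Q.chart_v_pow_mul m p)]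
    split_ifs with h
    · rw [← h]
      simp
    · simp

/-- An element all of whose weight components vanish is zero. -/
theorem eq_zero_of_weight_eq_zero {a : A} (h : ∀ n, Q.weight n a = 0) : a = 0 := by
  classical
  let w : ℤ → A := fun n => if 0 ≤ n then Q.u ^ n.toNat else Q.v ^ (-n).toNat
  let g : ℤ → Polynomial ℂ := fun n =>
    if 0 ≤ n then 1 else (Polynomial.C c - Polynomial.X ^ 2) ^ (-n).toNat
  have hg (n : ℤ) : g n ≠ 0 := by
    have hne : (Polynomial.C c - Polynomial.X ^ 2 : Polynomial ℂ) ≠ 0 := by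
      intro h0
      have : (Polynomial.C c - Polynomial.X ^ 2 : Polynomial ℂ).natDegree = 2 := by
        compute_degree!
      simp [h0] at this
    simp only [g]
    split_ifs
    exacts [one_ne_zero, pow_ne_zero _ hne]
  have hwg (m : ℤ) (p : Polynomial ℂ) : Q.chart (w m * Polynomial.aeval Q.z p) =
      LaurentPolynomial.C (g m * p) * LaurentPolynomial.T m := by
    simp only [w, g]
    split_ifs with hm
    · rw [chart_u_pow_mul, Int.toNat_of_nonneg hm, one_mul]
    · rw [chart_v_pow_mul, Int.toNat_of_nonneg (by omega), neg_neg]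
  let ν : (ℤ →₀ Polynomial ℂ) →ₗ[ℂ] A := Finsupp.lsum ℂ fun n =>
    (LinearMap.mulLeft ℂ (w n)) ∘ₗ (Polynomial.aeval Q.z).toLinearMap
  have hν_single (n : ℤ) (p : Polynomial ℂ) :
      ν (Finsupp.single n p) = w n * Polynomial.aeval Q.z p := by
    simp [ν]
  obtain ⟨F, rfl⟩ : a ∈ LinearMap.range ν := by
    refine Q.mem_of_monomials_mem (LinearMap.range ν) (fun n p => ⟨Finsupp.single n p, ?_⟩)
      (fun n p => ⟨if n = 0 then Finsupp.single 0 p else Finsupp.single (-n) p, ?_⟩) a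
    · simp [hν_single, w]
    · split_ifs with hn
      · simp [hν_single, w, hn]
      · rw [hν_single]
        simp [w, hn]
  have hF (n : ℤ) : Q.weight n (ν F) = g n * F n := by
    clear h
    induction F using Finsupp.induction_linear with
    | zero => simp
    | add F G hF hG => simp [hF, hG, mul_add]
    | single m p =>
      rw [hν_single, Q.weight_of_chart_eq (hwg m p), Finsupp.single_apply]
      split_ifs with hm
      · rw [hm]
      · simp
  have : F = 0 := by
    ext1 n
    simpa [hg n] using (hF n).symm.trans (h n)
  rw [this, map_zero]

theorem eq_aeval_z_of_Lz_eq_zero {a : A} (h : Q.Lz a = 0) :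
    a = Polynomial.aeval Q.z (Q.weight 0 a) := by
  rw [← sub_eq_zero]
  refine Q.eq_zero_of_weight_eq_zero fun n => ?_
  rw [map_sub]
  by_cases hn : n = 0
  · rw [hn, weight_zero_aeval_z, sub_self]
  · have h1 : (n : ℂ) • Q.weight n a = 0 := by rw [← weight_Lz, h, map_zero]
    rw [(smul_eq_zero.mp h1).resolve_left (by exact_mod_cast hn), Q.weight_of_chart_eq (m := 0)
      (by simp only [chart_aeval_z, LaurentPolynomial.T_zero, mul_one]; rfl),
      if_neg (Ne.symm hn), sub_zero]

theorem exists_eq_aeval_z_add_Lz (a : A) :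
    ∃ b, a = Polynomial.aeval Q.z (Q.weight 0 a) + Q.Lz b := by
  suffices h : a ∈ LinearMap.range (Polynomial.aeval Q.z).toLinearMap ⊔
      LinearMap.range Q.Lz.toLinearMap by
    obtain ⟨_, ⟨p, rfl⟩, _, ⟨b, rfl⟩, rfl⟩ := Submodule.mem_sup.mp h
    refine ⟨b, ?_⟩
    change Polynomial.aeval Q.z p + Q.Lz b =
      Polynomial.aeval Q.z (Q.weight 0 (Polynomial.aeval Q.z p + Q.Lz b)) + Q.Lz b
    rw [map_add, weight_zero_aeval_z, weight_Lz]
    simp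
  refine Q.mem_of_monomials_mem _ (fun n p => ?_) (fun n p => ?_) a
  · rcases n with _ | n
    · exact Submodule.mem_sup_left ⟨p, by simp⟩
    · refine Submodule.mem_sup_right
        ⟨((n + 1 : ℕ) : ℂ)⁻¹ • (Q.u ^ (n + 1) * Polynomial.aeval Q.z p), ?_⟩
      change Q.Lz _ = _
      rw [Derivation.map_smul, Lz_u_pow_mul, smul_smul,
        inv_mul_cancel₀ (Nat.cast_ne_zero.mpr n.succ_ne_zero), one_smul]
  · rcases n with _ | n
    · exact Submodule.mem_sup_left ⟨p, by simp⟩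
    · refine Submodule.mem_sup_right
        ⟨(-((n + 1 : ℕ) : ℂ))⁻¹ • (Q.v ^ (n + 1) * Polynomial.aeval Q.z p), ?_⟩
      change Q.Lz _ = _
      rw [Derivation.map_smul, Lz_v_pow_mul, smul_smul,
        inv_mul_cancel₀ (neg_ne_zero.mpr (Nat.cast_ne_zero.mpr n.succ_ne_zero)), one_smul]

open KaehlerDifferential in
theorem D_relation : Q.v • D ℂ A Q.u + Q.u • D ℂ A Q.v + (2 * Q.z) • D ℂ A Q.z = 0 := by
  have h := congrArg (D ℂ A) Q.u_mul_v
  rw [map_sub, Derivation.map_algebraMap, Derivation.leibniz, Derivation.leibniz_pow, zero_sub,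
    eq_neg_iff_add_eq_zero] at h
  rw [← h]
  module

open KaehlerDifferential in
theorem span_D : Submodule.span A {D ℂ A Q.u, D ℂ A Q.v, D ℂ A Q.z} = ⊤ := by
  rw [eq_top_iff, ← span_range_derivation, Submodule.span_le]
  rintro _ ⟨a, rfl⟩
  have ha : a ∈ Algebra.adjoin ℂ {Q.u, Q.v, Q.z} := Q.adjoin_eq_top ▸ trivial
  induction ha using Algebra.adjoin_induction with
  | mem x hx =>
    refine Submodule.subset_span ?_
    rcases hx with rfl | rfl | rfl <;> simp
  | algebraMap r => simp
  | add x y _ _ hx hy =>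
    rw [map_add]
    exact Submodule.add_mem _ hx hy
  | mul x y _ _ hx hy =>
    rw [Derivation.leibniz]
    exact Submodule.add_mem _ (Submodule.smul_mem _ _ hy) (Submodule.smul_mem _ _ hx)

/-- The alternating form `D₁ ∧ D₂` on Kähler differentials. -/
noncomputable def derivationWedge (D₁ D₂ : Derivation ℂ A A) :
    (KaehlerDifferential ℂ A) [⋀^Fin 2]→ₗ[A] A :=
  Matrix.detRowAlternating.compLinearMap
    (LinearMap.pi ![D₁.liftKaehlerDifferential, D₂.liftKaehlerDifferential])

theorem derivationWedge_D (D₁ D₂ : Derivation ℂ A A) (a b : A) :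
    derivationWedge D₁ D₂ ![KaehlerDifferential.D ℂ A a, KaehlerDifferential.D ℂ A b] =
      D₁ a * D₂ b - D₂ a * D₁ b := by
  refine (Matrix.det_fin_two (R := A) _).trans ?_
  simp

/-- The Poisson bivector of the quadric, as an alternating form on Kähler differentials. -/
noncomputable def poisson : (KaehlerDifferential ℂ A) [⋀^Fin 2]→ₗ[A] A :=
  algebraMap ℂ A (2 * c)⁻¹ • (Q.u • derivationWedge Q.Lv Q.Lz + Q.v • derivationWedge Q.Lz Q.Lu +
    Q.z • derivationWedge Q.Lu Q.Lv)

theorem inv_mul_casimir (hc : c ≠ 0) :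
    algebraMap ℂ A (2 * c)⁻¹ * (2 * (Q.u * Q.v) + 2 * Q.z ^ 2) = 1 := by
  have h : (2 * (Q.u * Q.v) + 2 * Q.z ^ 2) = algebraMap ℂ A (2 * c) := by
    rw [Q.u_mul_v, map_mul, map_ofNat]
    ring
  rw [h, ← map_mul, inv_mul_cancel₀ (mul_ne_zero two_ne_zero hc), map_one]

/-- The function `u v + z²` is a Casimir of the Poisson bracket. -/
theorem casimir (a : A) : Q.v * Q.Lu a + Q.u * Q.Lv a + 2 * Q.z * Q.Lz a = 0 := by
  have h : Q.v • Q.Lu + Q.u • Q.Lv + (2 * Q.z) • Q.Lz = 0 := by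
    refine Derivation.ext_of_adjoin_eq_top _ Q.adjoin_eq_top ?_
    rintro _ (rfl | rfl | rfl) <;>
      simp only [Derivation.add_apply, Derivation.smul_apply, smul_eq_mul, Derivation.zero_apply,
        Q.Lu_u, Q.Lu_v, Q.Lu_z, Q.Lv_u, Q.Lv_v, Q.Lv_z, Q.Lz_u, Q.Lz_v, Q.Lz_z] <;> ring
  exact Derivation.congr_fun h a

theorem poisson_D_z (hc : c ≠ 0) (a : A) :
    Q.poisson ![KaehlerDifferential.D ℂ A a, KaehlerDifferential.D ℂ A Q.z] = -Q.Lz a := by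
  simp only [poisson, AlternatingMap.smul_apply, AlternatingMap.add_apply, derivationWedge_D,
    smul_eq_mul, Q.Lu_z, Q.Lv_z, Q.Lz_z]
  linear_combination (algebraMap ℂ A (2 * c)⁻¹ * Q.z) * Q.casimir a -
    Q.Lz a * Q.inv_mul_casimir hc

theorem poisson_D_v (hc : c ≠ 0) (a : A) :
    Q.poisson ![KaehlerDifferential.D ℂ A a, KaehlerDifferential.D ℂ A Q.v] = -Q.Lv a := by
  simp only [poisson, AlternatingMap.smul_apply, AlternatingMap.add_apply, derivationWedge_D,
    smul_eq_mul, Q.Lu_v, Q.Lv_v, Q.Lz_v]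
  linear_combination (algebraMap ℂ A (2 * c)⁻¹ * Q.v) * Q.casimir a -
    Q.Lv a * Q.inv_mul_casimir hc

/-- The identification of `2`-forms with functions given by the Poisson bivector. -/
noncomputable def contract : ⋀[A]^2 (KaehlerDifferential ℂ A) →ₗ[A] A :=
  exteriorPower.alternatingMapLinearEquiv Q.poisson

theorem contract_ιMulti (m : Fin 2 → KaehlerDifferential ℂ A) :
    Q.contract (exteriorPower.ιMulti A 2 m) = Q.poisson m :=
  exteriorPower.alternatingMapLinearEquiv_apply_ιMulti _ _

theorem alternating_pair_swap {R M N : Type*} [CommRing R] [AddCommGroup M] [Module R M]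
    [AddCommGroup N] [Module R N] (f : M [⋀^Fin 2]→ₗ[R] N) (x y : M) :
    f ![x, y] = -f ![y, x] := by
  rw [← f.map_swap ![y, x] (zero_ne_one : (0 : Fin 2) ≠ 1)]
  congr 1
  ext i
  fin_cases i <;> simp

theorem alternating_pair_self {R M N : Type*} [CommRing R] [AddCommGroup M] [Module R M]
    [AddCommGroup N] [Module R N] (f : M [⋀^Fin 2]→ₗ[R] N) (x : M) : f ![x, x] = 0 :=
  f.map_eq_zero_of_eq ![x, x] (i := 0) (j := 1) rfl zero_ne_one

/-- The invariant area form of the quadric. -/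
noncomputable def area : ⋀[A]^2 (KaehlerDifferential ℂ A) :=
  algebraMap ℂ A (2 * c)⁻¹ •
    (Q.u • exteriorPower.ιMulti A 2 ![KaehlerDifferential.D ℂ A Q.v, KaehlerDifferential.D ℂ A Q.z]
    + Q.v • exteriorPower.ιMulti A 2 ![KaehlerDifferential.D ℂ A Q.z, KaehlerDifferential.D ℂ A Q.u]
    + Q.z • exteriorPower.ιMulti A 2 ![KaehlerDifferential.D ℂ A Q.u, KaehlerDifferential.D ℂ A Q.v])

theorem contract_area (hc : c ≠ 0) : Q.contract Q.area = 1 := by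
  simp only [area, map_smul, map_add, contract_ιMulti]
  rw [alternating_pair_swap _ (KaehlerDifferential.D ℂ A Q.z), poisson_D_z _ hc, poisson_D_z _ hc,
    poisson_D_v _ hc, Q.Lz_v, Q.Lz_u, Q.Lv_u]
  simp only [smul_eq_mul]
  linear_combination Q.inv_mul_casimir hc

/-- An alternating map on Kähler differentials is determined by its value on the area form. -/
theorem poisson_smul_eq (hc : c ≠ 0) {N : Type*} [AddCommGroup N] [Module A N]
    (W : (KaehlerDifferential ℂ A) [⋀^Fin 2]→ₗ[A] N) (m : Fin 2 → KaehlerDifferential ℂ A)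
    (hm : Set.range m ⊆
      {KaehlerDifferential.D ℂ A Q.u, KaehlerDifferential.D ℂ A Q.v, KaehlerDifferential.D ℂ A Q.z}) :
    Q.poisson m • (algebraMap ℂ A (2 * c)⁻¹ •
      (Q.u • W ![KaehlerDifferential.D ℂ A Q.v, KaehlerDifferential.D ℂ A Q.z]
      + Q.v • W ![KaehlerDifferential.D ℂ A Q.z, KaehlerDifferential.D ℂ A Q.u]
      + Q.z • W ![KaehlerDifferential.D ℂ A Q.u, KaehlerDifferential.D ℂ A Q.v])) = W m := by
  have hκ := Q.inv_mul_casimir hc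
  set du := KaehlerDifferential.D ℂ A Q.u
  set dv := KaehlerDifferential.D ℂ A Q.v
  set dz := KaehlerDifferential.D ℂ A Q.z
  have hrel (x : KaehlerDifferential ℂ A) :
      Q.v • W ![du, x] + Q.u • W ![dv, x] + (2 * Q.z) • W ![dz, x] = 0 := by
    rw [← AlternatingMap.map_vecCons_smul, ← AlternatingMap.map_vecCons_smul,
      ← AlternatingMap.map_vecCons_smul, ← AlternatingMap.map_vecCons_add,
      ← AlternatingMap.map_vecCons_add, Q.D_relation]
    exact W.map_coord_zero 0 rfl
  have hu := hrel du
  have hv := hrel dv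
  have hz := hrel dz
  rw [alternating_pair_self, alternating_pair_swap _ dv du] at hu
  rw [alternating_pair_self, alternating_pair_swap _ dz dv] at hv
  rw [alternating_pair_self, alternating_pair_swap _ du dz] at hz
  have hvz : Q.poisson ![dv, dz] = Q.v := by rw [Q.poisson_D_z hc, Q.Lz_v, neg_neg]
  have hzu : Q.poisson ![dz, du] = Q.u := by
    rw [alternating_pair_swap, Q.poisson_D_z hc, Q.Lz_u, neg_neg]
  have huv : Q.poisson ![du, dv] = 2 * Q.z := by rw [Q.poisson_D_v hc, Q.Lv_u, neg_neg]
  set σ := algebraMap ℂ A (2 * c)⁻¹ • (Q.u • W ![dv, dz] + Q.v • W ![dz, du] +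
    Q.z • W ![du, dv]) with hσ
  have avz : Q.poisson ![dv, dz] • σ = W ![dv, dz] := by
    rw [hvz, hσ]
    linear_combination (norm := module) hκ • W ![dv, dz] +
      (algebraMap ℂ A (2 * c)⁻¹ * Q.z) • hv - (algebraMap ℂ A (2 * c)⁻¹ * Q.v) • hz
  have azu : Q.poisson ![dz, du] • σ = W ![dz, du] := by
    rw [hzu, hσ]
    linear_combination (norm := module) hκ • W ![dz, du] -
      (algebraMap ℂ A (2 * c)⁻¹ * Q.z) • hu + (algebraMap ℂ A (2 * c)⁻¹ * Q.u) • hz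
  have auv : Q.poisson ![du, dv] • σ = W ![du, dv] := by
    rw [huv, hσ]
    linear_combination (norm := module) hκ • W ![du, dv] +
      (algebraMap ℂ A (2 * c)⁻¹ * Q.v) • hu - (algebraMap ℂ A (2 * c)⁻¹ * Q.u) • hv
  have swap {x y : KaehlerDifferential ℂ A} (h : Q.poisson ![x, y] • σ = W ![x, y]) :
      Q.poisson ![y, x] • σ = W ![y, x] := by
    rw [alternating_pair_swap _ y, alternating_pair_swap W y, neg_smul, h]
  have self (x : KaehlerDifferential ℂ A) : Q.poisson ![x, x] • σ = W ![x, x] := by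
    rw [alternating_pair_self, alternating_pair_self, zero_smul]
  have hm' : m = ![m 0, m 1] := by
    ext i
    fin_cases i <;> rfl
  have h0 : m 0 = du ∨ m 0 = dv ∨ m 0 = dz := hm ⟨0, rfl⟩
  have h1 : m 1 = du ∨ m 1 = dv ∨ m 1 = dz := hm ⟨1, rfl⟩
  rw [hm']
  rcases h0 with h0 | h0 | h0 <;> rcases h1 with h1 | h1 | h1 <;> rw [h0, h1]
  exacts [self _, auv, swap azu, swap auv, self _, avz, azu, swap avz, self _]

theorem contract_smul_area (hc : c ≠ 0) (η : ⋀[A]^2 (KaehlerDifferential ℂ A)) :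
    Q.contract η • Q.area = η := by
  have hspan := exteriorPower.ιMulti_span_of_span A 2 (KaehlerDifferential ℂ A) Q.span_D
  have h : Q.contract.smulRight Q.area = LinearMap.id := by
    refine LinearMap.ext_on hspan ?_
    rintro _ ⟨m, hm, rfl⟩
    rw [LinearMap.smulRight_apply, contract_ιMulti]
    exact Q.poisson_smul_eq hc _ m hm
  exact LinearMap.congr_fun h η

theorem contract_injective (hc : c ≠ 0) : Function.Injective Q.contract := fun η θ h => by
  rw [← Q.contract_smul_area hc η, h, Q.contract_smul_area hc θ]

open KaehlerDifferential in
/-- Modulo exact forms, every `1`-form on the quadric is `g dz + q(z) u dv`. -/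
theorem exists_eq_D_add (ω : KaehlerDifferential ℂ A) :
    ∃ (a g : A) (q : Polynomial ℂ),
      ω = D ℂ A a + g • D ℂ A Q.z + (Polynomial.aeval Q.z q * Q.u) • D ℂ A Q.v := by
  let fz : A →ₗ[ℂ] KaehlerDifferential ℂ A :=
    (LinearMap.toSpanSingleton A _ (D ℂ A Q.z)).restrictScalars ℂ
  let fv : Polynomial ℂ →ₗ[ℂ] KaehlerDifferential ℂ A :=
    (LinearMap.toSpanSingleton A _ (Q.u • D ℂ A Q.v)).restrictScalars ℂ ∘ₗ
      (Polynomial.aeval Q.z).toLinearMap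
  set S := LinearMap.range (D ℂ A).toLinearMap ⊔ LinearMap.range fz ⊔ LinearMap.range fv with hS
  suffices h : ω ∈ S by
    rw [hS, Submodule.mem_sup] at h
    obtain ⟨y, hy, _, ⟨q, rfl⟩, rfl⟩ := h
    rw [Submodule.mem_sup] at hy
    obtain ⟨_, ⟨a, rfl⟩, _, ⟨g, rfl⟩, rfl⟩ := hy
    exact ⟨a, g, q, by rw [mul_smul]; rfl⟩
  have hD (a : A) : D ℂ A a ∈ S := Submodule.mem_sup_left (Submodule.mem_sup_left ⟨a, rfl⟩)
  have hz (g : A) : g • D ℂ A Q.z ∈ S := Submodule.mem_sup_left (Submodule.mem_sup_right ⟨g, rfl⟩)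
  have hq (q : Polynomial ℂ) : (Polynomial.aeval Q.z q * Q.u) • D ℂ A Q.v ∈ S :=
    Submodule.mem_sup_right ⟨q, by rw [mul_smul]; rfl⟩
  have hpow (x : A) (n : ℕ) (p : Polynomial ℂ) :
      (x ^ n * Polynomial.aeval Q.z p) • D ℂ A x ∈ S := by
    have h : ((n + 1 : ℕ) : ℂ) • (x ^ n * Polynomial.aeval Q.z p) • D ℂ A x =
        D ℂ A (x ^ (n + 1) * Polynomial.aeval Q.z p) -
          (x ^ (n + 1) * Polynomial.aeval Q.z (Polynomial.derivative p)) • D ℂ A Q.z := by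
      rw [Derivation.leibniz, Derivation.map_aeval, Derivation.leibniz_pow, Nat.add_sub_cancel,
        Nat.cast_smul_eq_nsmul]
      module
    rw [← Submodule.smul_mem_iff S (Nat.cast_ne_zero.mpr n.succ_ne_zero : ((n + 1 : ℕ) : ℂ) ≠ 0), h]
    exact Submodule.sub_mem _ (hD _) (hz _)
  have hrel := Q.D_relation
  have huv (p : Polynomial ℂ) : Polynomial.aeval Q.z ((Polynomial.C c - Polynomial.X ^ 2) * p) =
      Q.u * Q.v * Polynomial.aeval Q.z p := by
    rw [Q.u_mul_v]
    simp
  have hu (a : A) : a • D ℂ A Q.u ∈ S := by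
    refine Q.mem_of_monomials_mem (S.comap
      ((LinearMap.toSpanSingleton A _ (D ℂ A Q.u)).restrictScalars ℂ)) (hpow Q.u) (fun n p => ?_) a
    change (Q.v ^ n * Polynomial.aeval Q.z p) • D ℂ A Q.u ∈ S
    rcases n with _ | _ | n
    · simpa using hpow Q.u 0 p
    · convert Submodule.sub_mem S (hz (-(2 * Q.z * Polynomial.aeval Q.z p))) (hq p) using 1
      linear_combination (norm := module) Polynomial.aeval Q.z p • hrel
    · convert Submodule.sub_mem S (hz (-(2 * Q.z * (Q.v ^ (n + 1) * Polynomial.aeval Q.z p))))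
        (hpow Q.v n ((Polynomial.C c - Polynomial.X ^ 2) * p)) using 1
      rw [huv]
      linear_combination (norm := module) (Q.v ^ (n + 1) * Polynomial.aeval Q.z p) • hrel
  have hv (a : A) : a • D ℂ A Q.v ∈ S := by
    refine Q.mem_of_monomials_mem (S.comap
      ((LinearMap.toSpanSingleton A _ (D ℂ A Q.v)).restrictScalars ℂ)) (fun n p => ?_) (hpow Q.v) a
    change (Q.u ^ n * Polynomial.aeval Q.z p) • D ℂ A Q.v ∈ S
    rcases n with _ | _ | n
    · simpa using hpow Q.v 0 p
    · convert hq p using 2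
      ring
    · convert Submodule.sub_mem S (hz (-(2 * Q.z * (Q.u ^ (n + 1) * Polynomial.aeval Q.z p))))
        (hpow Q.u n ((Polynomial.C c - Polynomial.X ^ 2) * p)) using 1
      rw [huv]
      linear_combination (norm := module) (Q.u ^ (n + 1) * Polynomial.aeval Q.z p) • hrel
  have hω : ω ∈ Submodule.span A {D ℂ A Q.u, D ℂ A Q.v, D ℂ A Q.z} :=
    Q.span_D ▸ Submodule.mem_top
  obtain ⟨a, b, e, rfl⟩ := Submodule.mem_span_triple.mp hω
  exact Submodule.add_mem _ (Submodule.add_mem _ (hu a) (hv b)) (hz e)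

theorem ker_D (Q : QuadricCoordinates c A) :
    LinearMap.ker (KaehlerDifferential.D ℂ A).toLinearMap = ℂ ∙ (1 : A) := by
  ext a
  rw [Submodule.mem_span_singleton]
  constructor
  · intro (h : KaehlerDifferential.D ℂ A a = 0)
    have hL (L : Derivation ℂ A A) : L a = 0 := by
      rw [← L.liftKaehlerDifferential_comp_D, h, map_zero]
    have ha := Q.eq_aeval_z_of_Lz_eq_zero (hL _)
    set p := Q.weight 0 a
    have hu : Q.u ^ 1 * Polynomial.aeval Q.z (Polynomial.derivative p) = 0 := by
      have := hL Q.Lu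
      rw [ha, Derivation.map_aeval, Q.Lu_z, smul_eq_mul] at this
      linear_combination -this
    have hp : Polynomial.derivative p = 0 := by
      have := Q.weight_of_chart_eq (Q.chart_u_pow_mul 1 (Polynomial.derivative p)) 1
      rw [hu, map_zero] at this
      simpa using this.symm
    refine ⟨p.coeff 0, ?_⟩
    rw [ha, Polynomial.eq_C_of_derivative_eq_zero hp, Polynomial.aeval_C, Polynomial.coeff_C_zero,
      Algebra.algebraMap_eq_smul_one]
  · rintro ⟨r, rfl⟩
    rw [← Algebra.algebraMap_eq_smul_one]
    exact (KaehlerDifferential.D ℂ A).map_algebraMap r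

theorem algebra_one_ne_zero (Q : QuadricCoordinates c A) : (1 : A) ≠ 0 := fun h => by
  have := congrArg Q.chart h
  simp at this

theorem finrank_ker_D (Q : QuadricCoordinates c A) :
    Module.finrank ℂ (LinearMap.ker (KaehlerDifferential.D ℂ A).toLinearMap) = 1 := by
  rw [Q.ker_D]
  exact finrank_span_singleton Q.algebra_one_ne_zero

theorem Lv_aeval_z_mul_u (q : Polynomial ℂ) : Q.Lv (Polynomial.aeval Q.z q * Q.u) =
    Polynomial.aeval Q.z
      (Polynomial.derivative ((Polynomial.C c - Polynomial.X ^ 2) * q)) := by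
  rw [Derivation.leibniz, Derivation.map_aeval, Q.Lv_u, Q.Lv_z]
  simp only [Polynomial.derivative_mul, map_sub, map_add, map_mul, map_pow, Polynomial.aeval_X,
    Polynomial.aeval_C, Polynomial.derivative_C, Polynomial.derivative_X_pow, smul_eq_mul, map_zero,
    map_natCast]
  push_cast
  linear_combination Polynomial.aeval Q.z (Polynomial.derivative q) * Q.u_mul_v

section deRham

variable {d1 : KaehlerDifferential ℂ A →ₗ[ℂ] ⋀[A]^2 (KaehlerDifferential ℂ A)}

theorem contract_d1 (hc : c ≠ 0)
    (hd1 : ∀ a b : A, d1 (a • KaehlerDifferential.D ℂ A b) =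
      exteriorPower.ιMulti A 2 ![KaehlerDifferential.D ℂ A a, KaehlerDifferential.D ℂ A b])
    (a g : A) (q : Polynomial ℂ) :
    Q.contract (d1 (KaehlerDifferential.D ℂ A a + g • KaehlerDifferential.D ℂ A Q.z +
      (Polynomial.aeval Q.z q * Q.u) • KaehlerDifferential.D ℂ A Q.v)) =
      -(Q.Lz g + Polynomial.aeval Q.z
        (Polynomial.derivative ((Polynomial.C c - Polynomial.X ^ 2) * q))) := by
  have ha : Q.contract (d1 (KaehlerDifferential.D ℂ A a)) = 0 := by
    rw [← one_smul A (KaehlerDifferential.D ℂ A a), hd1, contract_ιMulti]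
    exact Q.poisson.map_coord_zero 0 (Derivation.map_one_eq_zero _)
  rw [map_add, map_add, map_add, map_add, ha, hd1, hd1, contract_ιMulti, contract_ιMulti,
    Q.poisson_D_z hc, Q.poisson_D_v hc, Lv_aeval_z_mul_u]
  ring

theorem ker_d1_le_range_D (Q : QuadricCoordinates c A) (hc : c ≠ 0)
    (hd1 : ∀ a b : A, d1 (a • KaehlerDifferential.D ℂ A b) =
      exteriorPower.ιMulti A 2 ![KaehlerDifferential.D ℂ A a, KaehlerDifferential.D ℂ A b]) :
    LinearMap.ker d1 ≤ LinearMap.range (KaehlerDifferential.D ℂ A).toLinearMap := by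
  intro ω hω
  obtain ⟨a, g, q, rfl⟩ := Q.exists_eq_D_add ω
  have h := Q.contract_d1 hc hd1 a g q
  rw [LinearMap.mem_ker.mp hω, map_zero, zero_eq_neg] at h
  have hq := congrArg (Q.weight 0) h
  rw [map_add, weight_Lz, weight_zero_aeval_z, map_zero, Int.cast_zero, zero_smul, zero_add] at hq
  obtain rfl := Polynomial.eq_zero_of_derivative_quadratic_mul_eq_zero hq
  rw [mul_zero, map_zero, map_zero, add_zero] at h
  obtain ⟨P, hP⟩ := Polynomial.derivative_surjective_of_charZero (Q.weight 0 g)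
  refine ⟨a + Polynomial.aeval Q.z P, ?_⟩
  change KaehlerDifferential.D ℂ A _ = _
  rw [map_add, Derivation.map_aeval, hP, ← Q.eq_aeval_z_of_Lz_eq_zero h, map_zero, zero_mul,
    zero_smul, add_zero]

theorem finrank_quotient_range_d1 (Q : QuadricCoordinates c A) (hc : c ≠ 0)
    (hd1 : ∀ a b : A, d1 (a • KaehlerDifferential.D ℂ A b) =
      exteriorPower.ιMulti A 2 ![KaehlerDifferential.D ℂ A a, KaehlerDifferential.D ℂ A b]) :
    Module.finrank ℂ (⋀[A]^2 (KaehlerDifferential ℂ A) ⧸ LinearMap.range d1) = 1 := by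
  obtain ⟨φ, hφ1, hφ⟩ := Polynomial.exists_functional_ker_derivative_quadratic_mul hc
  let Φ : ⋀[A]^2 (KaehlerDifferential ℂ A) →ₗ[ℂ] ℂ :=
    φ ∘ₗ Q.weight 0 ∘ₗ Q.contract.restrictScalars ℂ
  have hΦ (η) : Φ η = φ (Q.weight 0 (Q.contract η)) := rfl
  have hsurj : Function.Surjective Φ := by
    refine LinearMap.surjective fun h => hφ1 ?_
    have := LinearMap.congr_fun h Q.area
    rwa [hΦ, Q.contract_area hc, ← map_one (Polynomial.aeval (R := ℂ) Q.z),
      weight_zero_aeval_z] at this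
  have hker : LinearMap.ker Φ = LinearMap.range d1 := by
    ext η
    rw [LinearMap.mem_ker, hΦ]
    constructor
    · intro h
      obtain ⟨q, hq⟩ := (hφ _).mp h
      obtain ⟨b, hb⟩ := Q.exists_eq_aeval_z_add_Lz (Q.contract η)
      refine ⟨_, Q.contract_injective hc ((Q.contract_d1 hc hd1 0 (-b) (-q)).trans ?_)⟩
      rw [hb, hq, mul_neg, map_neg, map_neg, map_neg]
      ring
    · rintro ⟨ω, rfl⟩
      obtain ⟨a, g, q, rfl⟩ := Q.exists_eq_D_add ω
      rw [Q.contract_d1 hc hd1, map_neg, map_add, weight_Lz, weight_zero_aeval_z, Int.cast_zero,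
        zero_smul, zero_add, map_neg, (hφ _).mpr ⟨q, rfl⟩, neg_zero]
  rw [← hker, (Φ.quotKerEquivOfSurjective hsurj).finrank_eq, Module.finrank_self]

end deRham

end QuadricCoordinates

/-- A vector field on affine space annihilating `r` preserves the ideal generated by `r`. -/
theorem mk_derivation_eq_zero {R : Type*} [CommRing R] [Algebra ℂ R] {r : R}
    {d : Derivation ℂ R R} (hd : d r = 0) (p : R)
    (hp : Ideal.Quotient.mkₐ ℂ (Ideal.span {r}) p = 0) :
    Ideal.Quotient.mkₐ ℂ (Ideal.span {r}) (d p) = 0 := by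
  obtain ⟨q, rfl⟩ := Ideal.mem_span_singleton.mp (Ideal.Quotient.eq_zero_iff_mem.mp hp)
  rw [Derivation.leibniz, hd, smul_zero, add_zero]
  exact Ideal.Quotient.eq_zero_iff_mem.mpr
    (Ideal.mul_mem_right _ _ (Ideal.mem_span_singleton_self _))

/-- A vector field on affine space annihilating `x² + y² + z² - c` restricts to the quadric. -/
noncomputable def quadricDerivation (c : ℂ) (f : Fin 3 → MvPolynomial (Fin 3) ℂ)
    (hf : mkDerivation ℂ f (X 0 ^ 2 + X 1 ^ 2 + X 2 ^ 2 - C c) = 0) :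
    Derivation ℂ (QuadricRing c) (QuadricRing c) :=
  Derivation.liftOfSurjective (Ideal.Quotient.mkₐ_surjective ℂ _) (mk_derivation_eq_zero hf)

theorem quadricDerivation_mk (c : ℂ) (f : Fin 3 → MvPolynomial (Fin 3) ℂ)
    (hf : mkDerivation ℂ f (X 0 ^ 2 + X 1 ^ 2 + X 2 ^ 2 - C c) = 0)
    (p : MvPolynomial (Fin 3) ℂ) :
    quadricDerivation c f hf (Ideal.Quotient.mk _ p) =
      Ideal.Quotient.mk _ (mkDerivation ℂ f p) :=
  Derivation.liftOfSurjective_apply (Ideal.Quotient.mkₐ_surjective ℂ _)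
    (mk_derivation_eq_zero hf) p

theorem C_I_sq {σ : Type*} : (C Complex.I : MvPolynomial σ ℂ) ^ 2 = -1 := by
  rw [← map_pow, Complex.I_sq, map_neg, map_one]

theorem mkDerivation_X_add (f : Fin 3 → MvPolynomial (Fin 3) ℂ) :
    mkDerivation ℂ f (X 0 + C Complex.I * X 1) = f 0 + C Complex.I * f 1 := by
  simp [Derivation.leibniz]

theorem mkDerivation_X_sub (f : Fin 3 → MvPolynomial (Fin 3) ℂ) :
    mkDerivation ℂ f (X 0 - C Complex.I * X 1) = f 0 - C Complex.I * f 1 := by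
  simp [Derivation.leibniz]

/-- The chart `u ≠ 0` of the quadric, with `x = (u + v) / 2`, `y = (u - v) / 2i` and
`v = (c - z²) / u`. -/
noncomputable def quadricChart (c : ℂ) :
    QuadricRing c →ₐ[ℂ] LaurentPolynomial (Polynomial ℂ) :=
  Ideal.Quotient.liftₐ _ (aeval ![
    (1 / 2 : ℂ) • (LaurentPolynomial.T 1 +
      LaurentPolynomial.C (Polynomial.C c - Polynomial.X ^ 2) * LaurentPolynomial.T (-1)),
    (-Complex.I / 2) • (LaurentPolynomial.T 1 -
      LaurentPolynomial.C (Polynomial.C c - Polynomial.X ^ 2) * LaurentPolynomial.T (-1)),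
    LaurentPolynomial.C Polynomial.X]) fun p hp => by
      obtain ⟨q, rfl⟩ := Ideal.mem_span_singleton.mp hp
      rw [map_mul]
      refine mul_eq_zero_of_left ?_ _
      have hT : (LaurentPolynomial.T 1 * LaurentPolynomial.T (-1) :
          LaurentPolynomial (Polynomial ℂ)) = 1 := by
        rw [← LaurentPolynomial.T_add]
        rfl
      have hc : algebraMap ℂ (LaurentPolynomial (Polynomial ℂ)) c =
        LaurentPolynomial.C (Polynomial.C c) := rfl
      have h2 : algebraMap ℂ (LaurentPolynomial (Polynomial ℂ)) (1 / 2) * 2 = 1 := by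
        rw [← map_ofNat (algebraMap ℂ (LaurentPolynomial (Polynomial ℂ))) 2, ← map_mul]
        norm_num
      have hI : algebraMap ℂ (LaurentPolynomial (Polynomial ℂ)) (-Complex.I / 2) ^ 2 =
          -algebraMap ℂ (LaurentPolynomial (Polynomial ℂ)) (1 / 2) ^ 2 := by
        rw [← map_pow, ← map_pow, ← map_neg]
        congr 1
        linear_combination (1 / 4) * Complex.I_sq
      simp only [map_sub, map_add, map_pow, aeval_X, aeval_C, Algebra.smul_def, hc,
        Matrix.cons_val_zero, Matrix.cons_val_one, Matrix.cons_val]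
      generalize algebraMap ℂ (LaurentPolynomial (Polynomial ℂ)) (-Complex.I / 2) = j at *
      generalize algebraMap ℂ (LaurentPolynomial (Polynomial ℂ)) (1 / 2) = k at *
      generalize LaurentPolynomial.C (Polynomial.C c) = e
      generalize LaurentPolynomial.C (Polynomial.X : Polynomial ℂ) = x
      generalize (LaurentPolynomial.T 1 : LaurentPolynomial (Polynomial ℂ)) = t at *
      generalize (LaurentPolynomial.T (-1) : LaurentPolynomial (Polynomial ℂ)) = s at *
      linear_combination (t - (e - x ^ 2) * s) ^ 2 * hI + 4 * k ^ 2 * (e - x ^ 2) * hT +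
        (e - x ^ 2) * (2 * k + 1) * h2

theorem I_mul_neg_I_div_two : Complex.I * (-Complex.I / 2) = 1 / 2 := by
  linear_combination (-1 / 2) * Complex.I_sq

theorem aeval_X_add {B : Type*} [CommRing B] [Algebra ℂ B] (s t r : B) :
    aeval ![(1 / 2 : ℂ) • (s + t), (-Complex.I / 2) • (s - t), r]
      (X 0 + C Complex.I * X 1 : MvPolynomial (Fin 3) ℂ) = s := by
  simp only [map_add, map_mul, aeval_X, aeval_C, Matrix.cons_val_zero, Matrix.cons_val_one,
    ← Algebra.smul_def, smul_smul, I_mul_neg_I_div_two]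
  module

theorem aeval_X_sub {B : Type*} [CommRing B] [Algebra ℂ B] (s t r : B) :
    aeval ![(1 / 2 : ℂ) • (s + t), (-Complex.I / 2) • (s - t), r]
      (X 0 - C Complex.I * X 1 : MvPolynomial (Fin 3) ℂ) = t := by
  simp only [map_sub, map_mul, aeval_X, aeval_C, Matrix.cons_val_zero, Matrix.cons_val_one,
    ← Algebra.smul_def, smul_smul, I_mul_neg_I_div_two]
  module

theorem adjoin_X_add_X_sub : Algebra.adjoin ℂ {(X 0 + C Complex.I * X 1 : MvPolynomial (Fin 3) ℂ),
    X 0 - C Complex.I * X 1, X 2} = ⊤ := by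
  rw [eq_top_iff, ← adjoin_range_X, Algebra.adjoin_le_iff]
  set S := Algebra.adjoin ℂ {(X 0 + C Complex.I * X 1 : MvPolynomial (Fin 3) ℂ),
    X 0 - C Complex.I * X 1, X 2}
  have hu : X 0 + C Complex.I * X 1 ∈ S := Algebra.subset_adjoin (by simp)
  have hv : X 0 - C Complex.I * X 1 ∈ S := Algebra.subset_adjoin (by simp)
  have h2 : X 2 ∈ S := Algebra.subset_adjoin (by simp)
  have h0 : X 0 ∈ S := by
    convert S.smul_mem (S.add_mem hu hv) (1 / 2 : ℂ) using 1
    module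
  have h1 : X 1 ∈ S := by
    convert S.smul_mem (S.sub_mem hu hv) (-Complex.I / 2) using 1
    rw [add_sub_sub_cancel, ← two_smul ℂ, ← smul_eq_C_mul, smul_smul, smul_smul]
    convert (one_smul ℂ (X 1 : MvPolynomial (Fin 3) ℂ)).symm using 2
    linear_combination -Complex.I_sq
  rintro _ ⟨i, rfl⟩
  fin_cases i
  exacts [h0, h1, h2]

/-- The standard coordinates `u = x + iy`, `v = x - iy`, `z` on the quadric `x² + y² + z² = c`. -/
noncomputable def quadricCoordinates (c : ℂ) : QuadricCoordinates c (QuadricRing c) where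
  u := Ideal.Quotient.mk _ (X 0 + C Complex.I * X 1)
  v := Ideal.Quotient.mk _ (X 0 - C Complex.I * X 1)
  z := Ideal.Quotient.mk _ (X 2)
  Lu := quadricDerivation c ![X 2, C Complex.I * X 2, -(X 0 + C Complex.I * X 1)] (by
    simp [Derivation.leibniz_pow]
    ring)
  Lv := quadricDerivation c ![-X 2, C Complex.I * X 2, X 0 - C Complex.I * X 1] (by
    simp [Derivation.leibniz_pow]
    ring)
  Lz := quadricDerivation c ![C Complex.I * X 1, -(C Complex.I * X 0), 0] (by
    simp [Derivation.leibniz_pow]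
    ring)
  chart := quadricChart c
  u_mul_v := by
    rw [← Ideal.Quotient.mk_algebraMap, ← map_mul, ← map_pow, ← map_sub, Ideal.Quotient.eq,
      Ideal.mem_span_singleton, algebraMap_eq]
    refine ⟨1, ?_⟩
    linear_combination (-X 1 ^ 2) * C_I_sq (σ := Fin 3)
  adjoin_eq_top := by
    have h := congrArg (Subalgebra.map (Ideal.Quotient.mkₐ ℂ
      (Ideal.span {(X 0 : MvPolynomial (Fin 3) ℂ) ^ 2 + X 1 ^ 2 + X 2 ^ 2 - C c})))
      adjoin_X_add_X_sub
    rwa [AlgHom.map_adjoin, Algebra.map_top,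
      (AlgHom.range_eq_top _).mpr (Ideal.Quotient.mkₐ_surjective ℂ _), Set.image_insert_eq,
      Set.image_pair] at h
  Lu_u := by
    rw [quadricDerivation_mk, mkDerivation_X_add, ← map_zero (Ideal.Quotient.mk _)]
    congr 1
    simp only [Matrix.cons_val_zero, Matrix.cons_val_one]
    linear_combination X 2 * C_I_sq (σ := Fin 3)
  Lu_v := by
    rw [quadricDerivation_mk, mkDerivation_X_sub, ← map_ofNat (Ideal.Quotient.mk _) 2, ← map_mul]
    congr 1
    simp only [Matrix.cons_val_zero, Matrix.cons_val_one]
    linear_combination -X 2 * C_I_sq (σ := Fin 3)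
  Lu_z := by
    rw [quadricDerivation_mk, mkDerivation_X, ← map_neg]
    rfl
  Lv_u := by
    rw [quadricDerivation_mk, mkDerivation_X_add, ← map_ofNat (Ideal.Quotient.mk _) 2, ← map_mul,
      ← map_neg]
    congr 1
    simp only [Matrix.cons_val_zero, Matrix.cons_val_one]
    linear_combination X 2 * C_I_sq (σ := Fin 3)
  Lv_v := by
    rw [quadricDerivation_mk, mkDerivation_X_sub, ← map_zero (Ideal.Quotient.mk _)]
    congr 1
    simp only [Matrix.cons_val_zero, Matrix.cons_val_one]
    linear_combination -X 2 * C_I_sq (σ := Fin 3)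
  Lv_z := by
    rw [quadricDerivation_mk, mkDerivation_X]
    rfl
  Lz_u := by
    rw [quadricDerivation_mk, mkDerivation_X_add]
    congr 1
    simp only [Matrix.cons_val_zero, Matrix.cons_val_one]
    linear_combination -X 0 * C_I_sq (σ := Fin 3)
  Lz_v := by
    rw [quadricDerivation_mk, mkDerivation_X_sub, ← map_neg]
    congr 1
    simp only [Matrix.cons_val_zero, Matrix.cons_val_one]
    linear_combination X 0 * C_I_sq (σ := Fin 3)
  Lz_z := by
    rw [quadricDerivation_mk, mkDerivation_X, ← map_zero (Ideal.Quotient.mk _)]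
    rfl
  chart_u := aeval_X_add _ _ _
  chart_v := aeval_X_sub _ _ _
  chart_z := aeval_X _ 2

/-- the algebraic de Rham cohomology of the smooth affine quadric
`x² + y² + z² = c` (`c ≠ 0`) over `ℂ` has `dim H⁰ = 1`, `H¹ = 0`, `dim H² = 1`.
Here `Ω⁰ = A`, `Ω¹ = Ω_{A/ℂ}` is the module of Kähler differentials with universal
derivation `d₀ = D`, `Ω² = Λ²_A Ω¹`, and `d₁` is any `ℂ`-linear map satisfying the
characterizing property `d₁(a·db) = da ∧ db` of the exterior derivative. -/
theorem stmt14 (c : ℂ) (hc : c ≠ 0)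
    (d1 : KaehlerDifferential ℂ (QuadricRing c) →ₗ[ℂ]
          ⋀[QuadricRing c]^2 (KaehlerDifferential ℂ (QuadricRing c)))
    (hd1 : ∀ a b : QuadricRing c,
      d1 (a • KaehlerDifferential.D ℂ (QuadricRing c) b) =
        ⟨ExteriorAlgebra.ιMulti (QuadricRing c) 2
            ![KaehlerDifferential.D ℂ (QuadricRing c) a,
              KaehlerDifferential.D ℂ (QuadricRing c) b],
         ExteriorAlgebra.ιMulti_range (QuadricRing c) 2 (Set.mem_range_self _)⟩) :
    Module.finrank ℂ
        (LinearMap.ker ((KaehlerDifferential.D ℂ (QuadricRing c)).toLinearMap)) = 1 ∧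
    Subsingleton
      (↥(LinearMap.ker d1) ⧸
        Submodule.comap (LinearMap.ker d1).subtype
          (LinearMap.range ((KaehlerDifferential.D ℂ (QuadricRing c)).toLinearMap))) ∧
    Module.finrank ℂ
        ((⋀[QuadricRing c]^2 (KaehlerDifferential ℂ (QuadricRing c))) ⧸
          LinearMap.range d1) = 1 := by
  have Q := quadricCoordinates c
  refine ⟨Q.finrank_ker_D, ?_, Q.finrank_quotient_range_d1 hc hd1⟩
  rw [Submodule.Quotient.subsingleton_iff]
  exact Submodule.comap_subtype_eq_top.mpr (Q.ker_d1_le_range_D hc hd1)
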